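/- Let Ω ⊆ ℝⁿ be open and F : Ω → ℝᵐ be semismooth on Ω with respect to Ψ. Then for every x ∈ Ω, the convex hull of the B-Jacobian satisfies ∅ ≠ conv ∇̄F(x) ⊆ (cocl Ψ)(x). -/

import Mathlib

open Filter Topology Set

/-- `F` is semismooth at `xb` (relative to the open set `Ω`) with respect to the set-valued
mapping `Ψ` into linear maps: `dom Ψ` is a neighborhood of `xb`, `Ψ` is locally bounded at
`xb`, and `sup{‖F x - F xb - A (x - xb)‖ : A ∈ Ψ x} = o(‖x - xb‖)` as `x → xb` in `Ω`. -/
def SemismoothAt {n m : ℕ} (Ω : Set (EuclideanSpace ℝ (Fin n)))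
    (F : EuclideanSpace ℝ (Fin n) → EuclideanSpace ℝ (Fin m))
    (Ψ : EuclideanSpace ℝ (Fin n) → Set (EuclideanSpace ℝ (Fin n) →L[ℝ] EuclideanSpace ℝ (Fin m)))
    (xb : EuclideanSpace ℝ (Fin n)) : Prop :=
  {x | (Ψ x).Nonempty} ∈ 𝓝 xb ∧
  (∃ U ∈ 𝓝 xb, ∃ M : ℝ, ∀ x ∈ U, ∀ A ∈ Ψ x, ‖A‖ ≤ M) ∧
  ∀ ε > 0, ∃ δ > 0, ∀ x ∈ Ω, ‖x - xb‖ < δ → ∀ A ∈ Ψ x,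
    ‖F x - F xb - A (x - xb)‖ ≤ ε * ‖x - xb‖

noncomputable def clMap {n m : ℕ}
    (Ψ : EuclideanSpace ℝ (Fin n) → Set (EuclideanSpace ℝ (Fin n) →L[ℝ] EuclideanSpace ℝ (Fin m)))
    (x : EuclideanSpace ℝ (Fin n)) : Set (EuclideanSpace ℝ (Fin n) →L[ℝ] EuclideanSpace ℝ (Fin m)) :=
  {A | (x, A) ∈ closure {p : EuclideanSpace ℝ (Fin n) × (EuclideanSpace ℝ (Fin n) →L[ℝ] EuclideanSpace ℝ (Fin m)) | p.2 ∈ Ψ p.1}}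

noncomputable def coclMap {n m : ℕ}
    (Ψ : EuclideanSpace ℝ (Fin n) → Set (EuclideanSpace ℝ (Fin n) →L[ℝ] EuclideanSpace ℝ (Fin m)))
    (x : EuclideanSpace ℝ (Fin n)) : Set (EuclideanSpace ℝ (Fin n) →L[ℝ] EuclideanSpace ℝ (Fin m)) :=
  convexHull ℝ (clMap Ψ x)

/-- The B-Jacobian of `F` at `x` (limits of Jacobians at nearby differentiability points). -/
noncomputable def BJac {n m : ℕ} (Ω : Set (EuclideanSpace ℝ (Fin n)))
    (F : EuclideanSpace ℝ (Fin n) → EuclideanSpace ℝ (Fin m))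
    (x : EuclideanSpace ℝ (Fin n)) : Set (EuclideanSpace ℝ (Fin n) →L[ℝ] EuclideanSpace ℝ (Fin m)) :=
  {A | ∃ xk : ℕ → EuclideanSpace ℝ (Fin n),
      (∀ k, xk k ∈ Ω ∧ DifferentiableAt ℝ F (xk k)) ∧
      Filter.Tendsto xk Filter.atTop (nhds x) ∧
      Filter.Tendsto (fun k => fderiv ℝ F (xk k)) Filter.atTop (nhds A)}

open MeasureTheory Metric

theorem aux_lip {n m : ℕ} {F : EuclideanSpace ℝ (Fin n) → EuclideanSpace ℝ (Fin m)}
    {s : Set (EuclideanSpace ℝ (Fin n))} (hs : Convex ℝ s) (M : NNReal)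
    (h : ∀ z ∈ s, ∀ᶠ w in 𝓝 z, ‖F w - F z‖ ≤ M * ‖w - z‖) : LipschitzOnWith (M + 1) F s := by
  have hcont : ∀ z ∈ s, ContinuousAt F z := by
    intro z hz
    rw [ContinuousAt, tendsto_iff_norm_sub_tendsto_zero]
    refine squeeze_zero' (Eventually.of_forall fun _ => norm_nonneg _) (h z hz) ?_
    have : Continuous fun w : EuclideanSpace ℝ (Fin n) => (M : ℝ) * ‖w - z‖ := by fun_prop
    simpa using this.tendsto z
  refine LipschitzOnWith.of_dist_le_mul fun b hb a ha => ?_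
  let γ : ℝ → EuclideanSpace ℝ (Fin n) := fun t => a + t • (b - a)
  have hγ : Continuous γ := by fun_prop
  have hγs : ∀ t ∈ Icc (0:ℝ) 1, γ t ∈ s := fun t ht => hs.add_smul_sub_mem ha hb ht
  by_cases hab : b = a
  · simp [hab]
  have hpos : 0 < ‖b - a‖ := norm_pos_iff.2 (sub_ne_zero.2 hab)
  have key := image_norm_le_of_liminf_right_slope_norm_lt_deriv_boundary
    (f := fun t => F (γ t) - F a) (f' := fun _ => M * ‖b - a‖) (a := 0) (b := 1)
    (B := fun t => (M + 1) * ‖b - a‖ * t) (B' := fun _ => (M + 1) * ‖b - a‖) ?_ ?_ ?_ ?_ ?_ ?_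
  · have := key (x := 1) (by simp)
    simpa [γ, dist_eq_norm] using this
  · intro t ht
    refine ContinuousAt.continuousWithinAt ?_
    exact ((hcont _ (hγs t ht)).comp hγ.continuousAt).sub continuousAt_const
  · intro t ht r hr
    refine Eventually.frequently ?_
    have h1 := hγ.continuousAt.eventually (h _ (hγs t ⟨ht.1, ht.2.le⟩))
    filter_upwards [nhdsWithin_le_nhds h1, self_mem_nhdsWithin] with z hz hzt
    have hzt' : 0 < z - t := sub_pos.2 hzt
    refine lt_of_le_of_lt ?_ hr
    rw [slope_def_field, div_le_iff₀ hzt']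
    have e : γ z - γ t = (z - t) • (b - a) := by simp [γ, sub_smul]
    rw [e, norm_smul, Real.norm_of_nonneg hzt'.le] at hz
    have := norm_sub_norm_le (F (γ z) - F a) (F (γ t) - F a)
    simp only [sub_sub_sub_cancel_right] at this
    simp only [Function.comp]
    nlinarith
  · simp [γ]
  · fun_prop
  · intro t _
    simpa using ((hasDerivAt_id t).const_mul ((M + 1) * ‖b - a‖)).hasDerivWithinAt
  · intro t _ _
    nlinarith

/-- Averaging argument. -/
theorem aux_avg {n m : ℕ}
    (l : (EuclideanSpace ℝ (Fin n) →L[ℝ] EuclideanSpace ℝ (Fin m)) →L[ℝ] ℝ) (d : ℝ) (hd : 0 < d) :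
    ∃ ε > 0, ∀ (G : EuclideanSpace ℝ (Fin n) → EuclideanSpace ℝ (Fin m)) (C : NNReal),
      LipschitzWith C G → (∀ w ∈ closedBall 0 1, ‖G w‖ ≤ ε) →
      ¬ (∀ᵐ w, w ∈ ball 0 1 → l (fderiv ℝ G w) ≤ -d) := by
  classical
  let φ : ContDiffBump (0 : EuclideanSpace ℝ (Fin n)) := ⟨1/2, 1, by norm_num, by norm_num⟩
  have hφpos : 0 < ∫ x, φ x := φ.integral_pos
  have hφc : HasCompactSupport φ := φ.hasCompactSupport
  obtain ⟨D, hD⟩ := ContDiff.lipschitzWith_of_hasCompactSupport (𝕂 := ℝ) hφc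
    (φ.contDiff (n := 1)) (by simp)
  let e : Fin n → EuclideanSpace ℝ (Fin n) := fun j => EuclideanSpace.single j 1
  let lj : Fin n → (EuclideanSpace ℝ (Fin m) →L[ℝ] ℝ) := fun j =>
    l.comp ((ContinuousLinearMap.smulRightL ℝ (EuclideanSpace ℝ (Fin n)) (EuclideanSpace ℝ (Fin m)))
      (EuclideanSpace.proj j))
  have hl : ∀ A, l A = ∑ j, lj j (A (e j)) := by
    intro A
    have : A = ∑ j, ContinuousLinearMap.smulRight
        (EuclideanSpace.proj j : EuclideanSpace ℝ (Fin n) →L[ℝ] ℝ) (A (e j)) := by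
      ext1 v
      have hv : v = ∑ j, v j • e j := by
        ext i
        simp [e, Finset.sum_apply, Pi.single_apply]
      conv_lhs => rw [hv]
      simp
    conv_lhs => rw [this]
    simp [lj]
  let κ : ℝ := ∑ j, (D * ‖lj j‖) * volume.real (closedBall (0 : EuclideanSpace ℝ (Fin n)) 1)
  have hκ : 0 ≤ κ := by positivity
  refine ⟨d * (∫ x, φ x) / (κ + 1) / 2, by positivity, ?_⟩
  intro G C hG hGε hcon
  set ε := d * (∫ x, φ x) / (κ + 1) / 2 with hε
  have hε0 : 0 ≤ ε := by positivity
  have hlip : ∀ j, LipschitzWith (‖lj j‖₊ * C) (fun x => lj j (G x)) := fun j =>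
    (lj j).lipschitz.comp hG
  have hφi : Integrable (fun x => φ x) := φ.integrable
  have hint : ∀ j, Integrable fun x => lineDeriv ℝ (fun x => lj j (G x)) x (e j) * φ x := by
    intro j
    refine hφi.bdd_mul (c := (‖lj j‖₊ * C : NNReal) * ‖e j‖)
      (aestronglyMeasurable_lineDeriv (hlip j).continuous _) ?_
    exact Eventually.of_forall fun x => norm_lineDeriv_le_of_lipschitz ℝ (hlip j)
  have hI : ∀ j, |∫ x, lineDeriv ℝ (fun x => lj j (G x)) x (e j) * φ x| ≤
      ε * ((D * ‖lj j‖) * volume.real (closedBall (0 : EuclideanSpace ℝ (Fin n)) 1)) := by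
    intro j
    rw [LipschitzWith.integral_lineDeriv_mul_eq (hlip j) hD hφc]
    rw [← Real.norm_eq_abs]
    have : ∫ x, (closedBall (0 : EuclideanSpace ℝ (Fin n)) 1).indicator
        (fun _ => ε * (D * ‖lj j‖)) x = ε * ((D * ‖lj j‖) *
          volume.real (closedBall (0 : EuclideanSpace ℝ (Fin n)) 1)) := by
      rw [integral_indicator_const _ measurableSet_closedBall, smul_eq_mul]; ring
    rw [← this]
    refine norm_integral_le_of_norm_le ?_ (Eventually.of_forall fun x => ?_)
    · refine (integrable_indicator_iff measurableSet_closedBall).2 ?_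
      exact integrableOn_const measure_closedBall_lt_top.ne
    · by_cases hx : x ∈ closedBall (0 : EuclideanSpace ℝ (Fin n)) 1
      · rw [indicator_of_mem hx, norm_mul]
        have h1 : ‖lineDeriv ℝ φ x (-e j)‖ ≤ D := by
          simpa [e] using norm_lineDeriv_le_of_lipschitz ℝ hD (x₀ := x) (v := -e j)
        have h2 : ‖lj j (G x)‖ ≤ ‖lj j‖ * ε :=
          (lj j).le_of_opNorm_le_of_le le_rfl (hGε x hx)
        calc _ ≤ (D : ℝ) * (‖lj j‖ * ε) := by gcongr
          _ = _ := by ring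
      · rw [indicator_of_notMem hx]
        have : (φ : EuclideanSpace ℝ (Fin n) → ℝ) =ᶠ[𝓝 x] fun _ => 0 := 
          notMem_tsupport_iff_eventuallyEq.1 (by rw [φ.tsupport_eq]; exact hx)
        rw [this.lineDeriv_eq]
        simp [lineDeriv]
  have hsum : ∫ x, l (fderiv ℝ G x) * φ x =
      ∑ j, ∫ x, lineDeriv ℝ (fun x => lj j (G x)) x (e j) * φ x := by
    rw [← integral_finsetSum _ fun j _ => hint j]
    refine integral_congr_ae ?_
    filter_upwards [hG.ae_differentiableAt] with x hx
    rw [hl, Finset.sum_mul]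
    refine Finset.sum_congr rfl fun j _ => ?_
    congr 1
    have : HasFDerivAt (fun x => lj j (G x)) ((lj j).comp (fderiv ℝ G x)) x :=
      (lj j).hasFDerivAt.comp x hx.hasFDerivAt
    rw [(this.hasLineDerivAt _).lineDeriv]; rfl
  have hub : ∫ x, l (fderiv ℝ G x) * φ x ≤ ∫ x, -d * φ x := by
    refine integral_mono_ae ?_ (hφi.const_mul _) ?_
    · refine (integrable_finsetSum Finset.univ fun j _ => hint j).congr ?_
      filter_upwards [hG.ae_differentiableAt] with x hx
      rw [hl, Finset.sum_mul]
      refine Finset.sum_congr rfl fun j _ => ?_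
      congr 1
      have : HasFDerivAt (fun x => lj j (G x)) ((lj j).comp (fderiv ℝ G x)) x :=
        (lj j).hasFDerivAt.comp x hx.hasFDerivAt
      rw [(this.hasLineDerivAt _).lineDeriv]; rfl
    · filter_upwards [hcon] with x hx
      by_cases hxb : x ∈ ball (0 : EuclideanSpace ℝ (Fin n)) 1
      · exact mul_le_mul_of_nonneg_right (hx hxb) φ.nonneg
      · have : φ x = 0 := φ.zero_of_le_dist (by simpa [φ] using hxb)
        simp [this]
  rw [integral_const_mul, hsum] at hub
  have hlow : |∑ j, ∫ x, lineDeriv ℝ (fun x => lj j (G x)) x (e j) * φ x| ≤ ε * κ := by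
    refine (Finset.abs_sum_le_sum_abs _ _).trans ?_
    rw [Finset.mul_sum]
    exact Finset.sum_le_sum fun j _ => hI j
  have h1 := (abs_le.1 hlow).1
  have h2 : d * (∫ x, φ x) ≤ ε * κ := by linarith
  have h3 : ε * (κ + 1) * 2 = d * (∫ x, φ x) := by rw [hε]; field_simp
  have : 0 < d * (∫ x, φ x) := by positivity
  nlinarith

theorem aux_mem {n m : ℕ} {F : EuclideanSpace ℝ (Fin n) → EuclideanSpace ℝ (Fin m)} {C : NNReal}
    (hF : LipschitzWith C F) {y : EuclideanSpace ℝ (Fin n)} (hy : DifferentiableAt ℝ F y)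
    {K : Set (EuclideanSpace ℝ (Fin n) →L[ℝ] EuclideanSpace ℝ (Fin m))} (hK : IsClosed K)
    (hKc : Convex ℝ K) {ρ : ℝ} (hρ : 0 < ρ) (h : ∀ᵐ z, z ∈ ball y ρ → fderiv ℝ F z ∈ K) :
    fderiv ℝ F y ∈ K := by
  by_contra hn
  obtain ⟨l, u, hl, hu⟩ := geometric_hahn_banach_closed_point hKc hK hn
  set L := fderiv ℝ F y with hL
  obtain ⟨ε, hε, H⟩ := aux_avg l (l L - u) (by linarith)
  have h1 := hy.hasFDerivAt.isLittleO.def hε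
  obtain ⟨δ, hδ, hδ'⟩ := Metric.eventually_nhds_iff.1 h1
  set r := min ρ δ / 2 with hr
  have hmin : 0 < min ρ δ := lt_min hρ hδ
  have hr0 : 0 < r := by positivity
  have hrρ : r < ρ := by have := min_le_left ρ δ; linarith
  have hrδ : r < δ := by have := min_le_right ρ δ; linarith
  let G : EuclideanSpace ℝ (Fin n) → EuclideanSpace ℝ (Fin m) := fun w =>
    r⁻¹ • (F (y + r • w) - F y) - L w
  refine H G (C + ‖L‖₊) ?_ ?_ ?_
  · refine LipschitzWith.of_dist_le_mul fun a b => ?_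
    have e : G a - G b = r⁻¹ • (F (y + r • a) - F (y + r • b)) - L (a - b) := by
      simp only [G, map_sub, smul_sub]; abel
    have h2 : ‖F (y + r • a) - F (y + r • b)‖ ≤ C * (r * ‖a - b‖) := by
      have := hF.norm_sub_le (y + r • a) (y + r • b)
      rwa [add_sub_add_left_eq_sub, ← smul_sub, norm_smul, Real.norm_of_nonneg hr0.le] at this
    rw [dist_eq_norm, dist_eq_norm, e]
    calc _ ≤ ‖r⁻¹ • (F (y + r • a) - F (y + r • b))‖ + ‖L (a - b)‖ := norm_sub_le _ _
      _ ≤ r⁻¹ * (C * (r * ‖a - b‖)) + ‖L‖ * ‖a - b‖ := by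
        rw [norm_smul, Real.norm_of_nonneg (inv_nonneg.2 hr0.le)]
        gcongr
        exact L.le_opNorm _
      _ = _ := by push_cast; field_simp
  · intro w hw
    have hw1 : ‖w‖ ≤ 1 := by simpa using hw
    have hrw : ‖r • w‖ ≤ r := by
      rw [norm_smul, Real.norm_of_nonneg hr0.le]; nlinarith
    have h2 := hδ' (y := y + r • w) (by simpa [dist_eq_norm] using hrw.trans_lt hrδ)
    simp only [add_sub_cancel_left] at h2
    have e : G w = r⁻¹ • (F (y + r • w) - F y - L (r • w)) := by
      simp only [G, map_smul, smul_sub, smul_smul, inv_mul_cancel₀ hr0.ne', one_smul]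
    rw [e, norm_smul, Real.norm_of_nonneg (inv_nonneg.2 hr0.le)]
    calc _ ≤ r⁻¹ * (ε * r) := by
          gcongr; exact h2.trans (by gcongr)
      _ = ε := by field_simp
  · have hq : Measure.QuasiMeasurePreserving
        (fun w : EuclideanSpace ℝ (Fin n) => y + r • w) volume volume := by
      have q1 := (measurePreserving_add_left
        (volume : Measure (EuclideanSpace ℝ (Fin n))) y).quasiMeasurePreserving
      have q2 : Measure.QuasiMeasurePreserving
        (fun w : EuclideanSpace ℝ (Fin n) => r • w) volume volume := by
        exact Measure.quasiMeasurePreserving_smul _ hr0.ne'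
      exact q1.comp q2
    filter_upwards [hq.ae h, hq.ae hF.ae_differentiableAt] with w hw hd hwb
    have hw1 : ‖w‖ < 1 := by simpa using hwb
    have hrw : ‖r • w‖ < ρ := by
      rw [norm_smul, Real.norm_of_nonneg hr0.le]; nlinarith
    have h2 := hl _ (hw (by simpa [dist_eq_norm] using hrw))
    have hG : HasFDerivAt G (fderiv ℝ F (y + r • w) - L) w := by
      have a1 : HasFDerivAt (fun w : EuclideanSpace ℝ (Fin n) => y + r • w)
          (r • ContinuousLinearMap.id ℝ (EuclideanSpace ℝ (Fin n))) w :=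
        ((hasFDerivAt_id w).const_smul r).const_add y
      have a2 := (((hd.hasFDerivAt.comp w a1).sub_const (F y)).const_smul r⁻¹).sub L.hasFDerivAt
      refine HasFDerivAt.congr_fderiv (f := G) a2 ?_
      ext1 v
      simp [smul_smul, inv_mul_cancel₀ hr0.ne']
    rw [hG.fderiv, map_sub]
    linarith

theorem aux_compact {V : Type*} [NormedAddCommGroup V] [NormedSpace ℝ V] [FiniteDimensional ℝ V]
    {s : Set V} (hs : IsCompact s) : IsCompact (convexHull ℝ s) := by
  have key : convexHull ℝ s = ⋃ k ∈ Finset.range (Module.finrank ℝ V + 2),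
      (fun p : (Fin k → ℝ) × (Fin k → V) => ∑ i, p.1 i • p.2 i) ''
        (stdSimplex ℝ (Fin k) ×ˢ Set.pi univ fun _ => s) := by
    apply Subset.antisymm
    · intro x hx
      obtain ⟨ι, _, z, w, hz, hai, hw, hw1, hx⟩ := eq_pos_convex_span_of_mem_convexHull hx
      have hcard := hai.card_le_finrank_succ
      have hle := Submodule.finrank_le (vectorSpan ℝ (range z))
      simp only [mem_iUnion]
      refine ⟨Fintype.card ι, by simp; omega, ?_⟩
      let e := Fintype.equivFin ι
      refine ⟨(w ∘ e.symm, z ∘ e.symm), ⟨⟨fun i => (hw _).le, ?_⟩, fun i _ => hz ⟨_, rfl⟩⟩, ?_⟩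
      · rw [← hw1]; exact Equiv.sum_comp e.symm w
      · rw [← hx]; exact Equiv.sum_comp e.symm fun i => w i • z i
    · simp only [iUnion_subset_iff]
      rintro k - _ ⟨⟨w, z⟩, ⟨hw, hz⟩, rfl⟩
      exact (convex_convexHull ℝ s).sum_mem (fun i _ => hw.1 i) hw.2
        fun i _ => subset_convexHull ℝ s (hz i trivial)
  rw [key]
  refine Finset.isCompact_biUnion _ fun k _ => ?_
  refine IsCompact.image ((isCompact_stdSimplex ℝ (Fin k)).prod (isCompact_univ_pi fun _ => hs)) ?_
  fun_prop

theorem aux_ae {n m : ℕ} (Ω : Set (EuclideanSpace ℝ (Fin n)))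
    (F : EuclideanSpace ℝ (Fin n) → EuclideanSpace ℝ (Fin m))
    (Ψ : EuclideanSpace ℝ (Fin n) → Set (EuclideanSpace ℝ (Fin n) →L[ℝ] EuclideanSpace ℝ (Fin m)))
    (h : ∀ x ∈ Ω, SemismoothAt Ω F Ψ x) :
    ∀ᵐ y, y ∈ Ω → DifferentiableAt ℝ F y → ∀ A ∈ Ψ y, A = fderiv ℝ F y := by
  let ε : ℕ → ℝ := fun k => 1 / ((k : ℝ) + 1)
  have hε : ∀ k, 0 < ε k := fun k => Nat.one_div_pos_of_nat
  let E : ℕ → ℕ → Set (EuclideanSpace ℝ (Fin n)) := fun i k =>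
    {z | ∀ x ∈ Ω, ‖x - z‖ < ε k → ∀ A ∈ Ψ x, ‖F x - F z - A (x - z)‖ ≤ ε i * ‖x - z‖}
  have hE : ∀ z ∈ Ω, ∀ i, ∃ k, z ∈ E i k := by
    intro z hz i
    obtain ⟨δ, hδ, H⟩ := (h z hz).2.2 (ε i) (hε i)
    obtain ⟨k, hk⟩ := exists_nat_one_div_lt hδ
    exact ⟨k, fun x hx hxz => H x hx (hxz.trans hk)⟩
  have hden : ∀ᵐ y, ∀ i k, y ∈ E i k → Tendsto (fun r => volume (E i k ∩ closedBall y r) /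
      volume (closedBall y r)) (𝓝[>] 0) (𝓝 1) := by
    rw [ae_all_iff]; intro i
    rw [ae_all_iff]; intro k
    exact ae_imp_of_ae_restrict (Besicovitch.ae_tendsto_measure_inter_div volume (E i k))
  filter_upwards [hden] with y hy hyΩ hd A hA
  have main : ∀ i, ∀ u, ‖(A - fderiv ℝ F y) u‖ ≤ (2 * ε i) * ‖u‖ := by
    intro i u
    obtain ⟨k, hk⟩ := hE y hyΩ i
    have hyd := hy i k hk
    have hcl : IsClosed {v | ‖(A - fderiv ℝ F y) v‖ ≤ (2 * ε i) * ‖v‖} :=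
      isClosed_le (by fun_prop) (by fun_prop)
    have : u ∈ closure {v | ‖(A - fderiv ℝ F y) v‖ ≤ (2 * ε i) * ‖v‖} := by
      rw [Metric.mem_closure_iff]
      intro η hη
      have hne := Measure.eventually_nonempty_inter_smul_of_density_one volume (E i k) y hyd
        (ball u η) measurableSet_ball (measure_ball_pos volume u hη).ne'
      have h1 := hd.hasFDerivAt.isLittleO.def (hε i)
      obtain ⟨δ, hδ, hδ'⟩ := Metric.eventually_nhds_iff.1 h1
      have hB : 0 < min δ (ε k) / (‖u‖ + η) := by
        have := lt_min hδ (hε k)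
        positivity
      obtain ⟨r, ⟨z, hzE, hz⟩, hr0, hr⟩ := (hne.and (Ioo_mem_nhdsGT hB)).exists
      obtain ⟨y1, hy1, _, ⟨v, hv, rfl⟩, rfl⟩ := hz
      rw [mem_singleton_iff] at hy1
      replace hzE : y + r • v ∈ E i k := by rw [← hy1]; exact hzE
      refine ⟨v, ?_, by rw [dist_comm]; exact hv⟩
      have hvn : ‖v‖ ≤ ‖u‖ + η := by
        have := norm_le_norm_add_norm_sub' v u
        rw [mem_ball, dist_eq_norm] at hv
        linarith
      have hrv : ‖r • v‖ < min δ (ε k) := by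
        rw [norm_smul, Real.norm_of_nonneg hr0.le]
        rw [lt_div_iff₀ (by positivity)] at hr
        nlinarith
      have e1 := hδ' (y := y + r • v) (by simpa [dist_eq_norm] using hrv.trans_le (min_le_left _ _))
      have e2 := hzE y hyΩ (by simpa [norm_neg] using hrv.trans_le (min_le_right _ _)) A hA
      simp only [add_sub_cancel_left] at e1
      simp only [sub_add_cancel_left, norm_neg, map_neg] at e2
      have e3 : ‖r • (A - fderiv ℝ F y) v‖ ≤ (2 * ε i) * ‖r • v‖ := by
        have : r • (A - fderiv ℝ F y) v = (F (y + r • v) - F y - fderiv ℝ F y (r • v)) +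
            (F y - F (y + r • v) - -A (r • v)) := by
          simp only [map_smul, _root_.sub_apply, smul_sub]; abel
        rw [this]
        refine (norm_add_le _ _).trans ?_
        linarith
      rw [norm_smul, norm_smul, Real.norm_of_nonneg hr0.le] at e3
      have : r * ‖(A - fderiv ℝ F y) v‖ ≤ r * ((2 * ε i) * ‖v‖) := by linarith
      exact le_of_mul_le_mul_left this hr0
    rwa [hcl.closure_eq] at this
  have hlim : Tendsto (fun i => 2 * ε i) atTop (𝓝 (2 * 0)) :=
    (tendsto_one_div_add_atTop_nhds_zero_nat (𝕜 := ℝ)).const_mul 2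
  ext1 u
  have h0 : ‖(A - fderiv ℝ F y) u‖ ≤ 2 * 0 * ‖u‖ :=
    ge_of_tendsto' (hlim.mul_const ‖u‖) fun i => main i u
  simp only [mul_zero, zero_mul, norm_le_zero_iff, _root_.sub_apply] at h0
  exact sub_eq_zero.1 h0

/-- Outer semicontinuity. -/
theorem aux_osc {n m : ℕ}
    (Ψ : EuclideanSpace ℝ (Fin n) → Set (EuclideanSpace ℝ (Fin n) →L[ℝ] EuclideanSpace ℝ (Fin m)))
    (x : EuclideanSpace ℝ (Fin n)) {ρ M : ℝ} (hρ : 0 < ρ)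
    (hM : ∀ z ∈ ball x ρ, ∀ A ∈ Ψ z, ‖A‖ ≤ M) {ε : ℝ} (hε : 0 < ε) :
    ∃ δ > 0, δ ≤ ρ ∧ ∀ z ∈ ball x δ, Ψ z ⊆ thickening ε (clMap Ψ x) := by
  by_contra! hcon
  have hk : ∀ k : ℕ, ∃ z ∈ ball x (ρ / ((k : ℝ) + 1)), ∃ A ∈ Ψ z, A ∉ thickening ε (clMap Ψ x) := by
    intro k
    obtain ⟨z, hz, hs⟩ := hcon (ρ / ((k : ℝ) + 1)) (by positivity)
      (div_le_self hρ.le (by have : (0:ℝ) ≤ k := by positivity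
                             linarith))
    obtain ⟨A, hA, hA'⟩ := not_subset.1 hs
    exact ⟨z, hz, A, hA, hA'⟩
  choose z hz A hA hA' using hk
  have hzx : Tendsto z atTop (𝓝 x) := by
    rw [tendsto_iff_dist_tendsto_zero]
    refine squeeze_zero (fun _ => dist_nonneg) (fun k => (hz k).le) ?_
    have := (tendsto_one_div_add_atTop_nhds_zero_nat (𝕜 := ℝ)).const_mul ρ
    simpa [div_eq_mul_inv] using this
  have hzρ : ∀ k, z k ∈ ball x ρ := fun k => ball_subset_ball
    (div_le_self hρ.le (by have : (0:ℝ) ≤ k := by positivity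
                           linarith)) (hz k)
  obtain ⟨B, -, φ, hφ, hB⟩ := (isCompact_closedBall
    (0 : EuclideanSpace ℝ (Fin n) →L[ℝ] EuclideanSpace ℝ (Fin m)) M).tendsto_subseq
    (x := A) (fun k => by simpa using hM _ (hzρ k) _ (hA k))
  have hBm : B ∈ clMap Ψ x :=
    mem_closure_of_tendsto ((hzx.comp hφ.tendsto_atTop).prodMk_nhds hB)
      (Eventually.of_forall fun k => hA (φ k))
  have := hB.eventually (isOpen_thickening.mem_nhds (self_subset_thickening hε _ hBm))
  obtain ⟨k, hk⟩ := this.exists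
  exact hA' _ hk

theorem convBJac_subset_cocl {n m : ℕ}
    (Ω : Set (EuclideanSpace ℝ (Fin n))) (hΩ : IsOpen Ω)
    (F : EuclideanSpace ℝ (Fin n) → EuclideanSpace ℝ (Fin m))
    (Ψ : EuclideanSpace ℝ (Fin n) → Set (EuclideanSpace ℝ (Fin n) →L[ℝ] EuclideanSpace ℝ (Fin m)))
    (h : ∀ x ∈ Ω, SemismoothAt Ω F Ψ x) :
    ∀ x ∈ Ω, (convexHull ℝ (BJac Ω F x)).Nonempty ∧
      convexHull ℝ (BJac Ω F x) ⊆ coclMap Ψ x := by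
  intro x hx
  obtain ⟨hne, ⟨U, hU, M, hM⟩, -⟩ := h x hx
  obtain ⟨ρ, hρ, hρs⟩ := Metric.mem_nhds_iff.1 (inter_mem (inter_mem hne hU) (hΩ.mem_nhds hx))
  have hρΩ : ball x ρ ⊆ Ω := fun z hz => (hρs hz).2
  have hρM : ∀ z ∈ ball x ρ, ∀ A ∈ Ψ z, ‖A‖ ≤ M := fun z hz => hM z (hρs hz).1.2
  have hρne : ∀ z ∈ ball x ρ, (Ψ z).Nonempty := fun z hz => (hρs hz).1.1
  have hM0 : 0 ≤ M := by
    obtain ⟨A, hA⟩ := hρne x (mem_ball_self hρ)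
    exact (norm_nonneg A).trans (hρM x (mem_ball_self hρ) A hA)
  -- local Lipschitz continuity
  have hlip : LipschitzOnWith (⟨M + 1, by linarith⟩ + 1) F (ball x ρ) := by
    refine aux_lip (convex_ball x ρ) _ fun z hz => ?_
    obtain ⟨δ, hδ, H⟩ := (h z (hρΩ hz)).2.2 1 one_pos
    filter_upwards [isOpen_ball.mem_nhds hz, ball_mem_nhds z hδ] with w hw hwδ
    obtain ⟨A, hA⟩ := hρne w hw
    have h1 := H w (hρΩ hw) (by simpa [dist_eq_norm] using hwδ) A hA
    have h2 := A.le_of_opNorm_le (hρM w hw A hA) (w - z)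
    have h3 := norm_le_norm_sub_add (F w - F z) (A (w - z))
    change _ ≤ (M + 1) * _
    linarith
  obtain ⟨G, hG, hFG⟩ := hlip.extend_finite_dimension
  have hev : ∀ z ∈ ball x ρ, F =ᶠ[𝓝 z] G := fun z hz =>
    hFG.eventuallyEq_of_mem (isOpen_ball.mem_nhds hz)
  have hdiff : ∀ᵐ z, z ∈ ball x ρ → DifferentiableAt ℝ F z := by
    filter_upwards [hG.ae_differentiableAt] with z hz hzb
    exact (hev z hzb).differentiableAt_iff.2 hz
  constructor
  · rw [convexHull_nonempty_iff]
    have hk : ∀ k : ℕ, ∃ z ∈ ball x (ρ / ((k : ℝ) + 1)), z ∈ ball x ρ → DifferentiableAt ℝ F z :=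
      fun k => (Measure.dense_of_ae hdiff).exists_mem_open isOpen_ball
        ⟨x, mem_ball_self (by positivity)⟩ |>.imp fun z hz => ⟨hz.2, hz.1⟩
    choose z hz hzd using hk
    have hzx : Tendsto z atTop (𝓝 x) := by
      rw [tendsto_iff_dist_tendsto_zero]
      refine squeeze_zero (fun _ => dist_nonneg) (fun k => (hz k).le) ?_
      have := (tendsto_one_div_add_atTop_nhds_zero_nat (𝕜 := ℝ)).const_mul ρ
      simpa [div_eq_mul_inv] using this
    have hzρ : ∀ k, z k ∈ ball x ρ := fun k => ball_subset_ball
      (div_le_self hρ.le (by have : (0:ℝ) ≤ k := by positivity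
                             linarith)) (hz k)
    obtain ⟨B, -, φ, hφ, hB⟩ := (isCompact_closedBall
      (0 : EuclideanSpace ℝ (Fin n) →L[ℝ] EuclideanSpace ℝ (Fin m)) _).tendsto_subseq
      (x := fun k => fderiv ℝ F (z k)) (fun k => by
        rw [mem_closedBall_zero_iff, (hev _ (hzρ k)).fderiv_eq]
        exact norm_fderiv_le_of_lipschitz ℝ hG)
    exact ⟨B, z ∘ φ, fun k => ⟨hρΩ (hzρ _), hzd _ (hzρ _)⟩, hzx.comp hφ.tendsto_atTop, hB⟩
  · refine convexHull_min ?_ (convex_convexHull ℝ _)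
    rintro A ⟨xk, hxk, hxt, hAt⟩
    have hcl : IsClosed (clMap Ψ x) :=
      isClosed_closure.preimage (Continuous.prodMk_right x)
    have hbd : clMap Ψ x ⊆ closedBall 0 M := by
      intro B hB
      rw [mem_closedBall_zero_iff]
      obtain ⟨p, hp, hpt⟩ := mem_closure_iff_seq_limit.1 hB
      have h1 : Tendsto (fun k => (p k).1) atTop (𝓝 x) := (continuous_fst.tendsto _).comp hpt
      have h2 : Tendsto (fun k => (p k).2) atTop (𝓝 B) := (continuous_snd.tendsto _).comp hpt
      refine le_of_tendsto h2.norm ?_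
      filter_upwards [h1.eventually (ball_mem_nhds x hρ)] with k hk
      exact hρM _ hk _ (hp k)
    have hcomp : IsCompact (coclMap Ψ x) :=
      aux_compact ((isCompact_closedBall _ _).of_isClosed_subset hcl hbd)
    rw [← hcomp.isClosed.closure_eq, closure_eq_iInter_cthickening]
    simp only [mem_iInter]
    intro ε hε
    obtain ⟨δ, hδ, hδρ, H⟩ := aux_osc Ψ x hρ hρM hε
    refine isClosed_cthickening.mem_of_tendsto hAt ?_
    filter_upwards [hxt.eventually (ball_mem_nhds x hδ)] with k hk
    have hkρ := ball_subset_ball hδρ hk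
    rw [(hev _ hkρ).fderiv_eq]
    obtain ⟨r, hr, hrs⟩ := Metric.isOpen_iff.1 isOpen_ball _ hk
    refine aux_mem hG ((hev _ hkρ).differentiableAt_iff.1 (hxk k).2) isClosed_cthickening
      ((convex_convexHull ℝ _).cthickening ε) hr ?_
    filter_upwards [aux_ae Ω F Ψ h, hdiff] with z hz hzd hzr
    have hzδ := hrs hzr
    have hzρ := ball_subset_ball hδρ hzδ
    obtain ⟨B, hB⟩ := hρne z hzρ
    have := hz (hρΩ hzρ) (hzd hzρ) B hB
    rw [← (hev _ hzρ).fderiv_eq, ← this]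
    exact thickening_subset_cthickening _ _
      (thickening_subset_of_subset ε (subset_convexHull ℝ _) (H z hzδ hB))
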